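/- For a tensor network (G,c) in which every edge capacity is a power of a fixed integer d, the maximum entanglement entropy between inputs and outputs over all tensor assignments equals log QMC(G,c): MEE(G,c) = log QMC(G,c). -/

import Mathlib

open scoped Classical

/-- A tensor-network template: a finite undirected graph with edge set `E`, internal
vertices `V`, input open ends `S`, output open ends `T`, and a capacity on each edge.
Each edge has two ends (`ends e 0` and `ends e 1`), each attached either to an internal
vertex or to an open end; each open end is the end of exactly one edge. -/
structure TN where
  V : Type
  E : Type
  S : Type
  T : Type
  fV : Fintype V
  dV : DecidableEq V
  fE : Fintype E
  dE : DecidableEq E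
  fS : Fintype S
  dS : DecidableEq S
  fT : Fintype T
  dT : DecidableEq T
  /-- The capacity (local Hilbert space dimension) of each edge. -/
  c : E → ℕ
  c_pos : ∀ e, 0 < c e
  /-- The two ends of each edge attach to internal vertices or open ends. -/
  ends : E → Fin 2 → V ⊕ S ⊕ T
  /-- Each input open end is the end of exactly one edge. -/
  openS : ∀ u : S, ∃! p : E × Fin 2, ends p.1 p.2 = Sum.inr (Sum.inl u)
  /-- Each output open end is the end of exactly one edge. -/
  openT : ∀ u : T, ∃! p : E × Fin 2, ends p.1 p.2 = Sum.inr (Sum.inr u)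

attribute [instance] TN.fV TN.dV TN.fE TN.dE TN.fS TN.dS TN.fT TN.dT

namespace TN

variable (N : TN)

/-- The edge-ends incident to an internal vertex `v`. -/
def Legs (v : N.V) : Type := {p : N.E × Fin 2 // N.ends p.1 p.2 = Sum.inl v}

noncomputable instance (v : N.V) : Fintype (N.Legs v) := by unfold Legs; infer_instance

/-- A tensor assignment: a tensor at each internal vertex, i.e. a complex number for each
choice of an index on each incident edge-end. -/
def Assignment : Type :=
  (v : N.V) → (((p : N.Legs v) → Fin (N.c p.1.1)) → ℂ)

noncomputable instance : TopologicalSpace N.Assignment := by unfold Assignment; infer_instance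

/-- The edge whose open end is the input `u`. -/
noncomputable def inEdge (u : N.S) : N.E := (N.openS u).choose.1

/-- The edge whose open end is the output `u`. -/
noncomputable def outEdge (u : N.T) : N.E := (N.openT u).choose.1

/-- Multi-indices on the input edges; a basis of the input space `V_S`. -/
def InIdx : Type := (u : N.S) → Fin (N.c (N.inEdge u))

/-- Multi-indices on the output edges; a basis of the output space `V_T`. -/
def OutIdx : Type := (u : N.T) → Fin (N.c (N.outEdge u))

noncomputable instance : Fintype N.InIdx := by unfold InIdx; infer_instance
noncomputable instance : Fintype N.OutIdx := by unfold OutIdx; infer_instance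
noncomputable instance : DecidableEq N.InIdx := by unfold InIdx; infer_instance
noncomputable instance : DecidableEq N.OutIdx := by unfold OutIdx; infer_instance

/-- The matrix of the linear map `β(G,c;𝒯) : V_S → V_T` obtained by contracting all
internal edges of the tensor network. -/
noncomputable def β (𝒯 : N.Assignment) : Matrix N.OutIdx N.InIdx ℂ :=
  fun iT iS => ∑ W : (e : N.E) → Fin (N.c e),
    if (∀ u : N.S, W (N.inEdge u) = iS u) ∧ (∀ u : N.T, W (N.outEdge u) = iT u) then
      ∏ v : N.V, 𝒯 v (fun p => W p.1.1)
    else 0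

/-- The quantum max-flow: the maximal rank of the contracted linear map over all
tensor assignments. -/
noncomputable def QMF : ℕ := sSup {r : ℕ | ∃ 𝒯 : N.Assignment, (N.β 𝒯).rank = r}

/-- `C` is an edge cut set: for some partition of vertices and open ends into an `S`-side
and a `T`-side, `C` is exactly the set of edges crossing the partition. -/
def IsCutSet (C : Finset N.E) : Prop :=
  ∃ f : N.V ⊕ N.S ⊕ N.T → Bool,
    (∀ u : N.S, f (Sum.inr (Sum.inl u)) = false) ∧
    (∀ u : N.T, f (Sum.inr (Sum.inr u)) = true) ∧
    (∀ e : N.E, e ∈ C ↔ f (N.ends e 0) ≠ f (N.ends e 1))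

/-- The quantum min-cut: the minimum over edge cut sets of the product of capacities. -/
noncomputable def QMC : ℕ :=
  sInf {m : ℕ | ∃ C : Finset N.E, N.IsCutSet C ∧ m = ∏ e ∈ C, N.c e}

end TN

namespace TN

/-- The entanglement entropy between inputs and outputs of the normalized tensor-network
state with matrix `C = β(G,c;𝒯)`: the von Neumann entropy of `ρ = CC†/Tr(CC†)`, computed
from the eigenvalues of the Hermitian matrix `CC†`. -/
noncomputable def EE (N : TN) (𝒯 : N.Assignment) : ℝ :=
  -∑ i, ((Matrix.isHermitian_mul_conjTranspose_self (N.β 𝒯)).eigenvalues i /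
          ((N.β 𝒯) * (N.β 𝒯).conjTranspose).trace.re) *
        Real.log ((Matrix.isHermitian_mul_conjTranspose_self (N.β 𝒯)).eigenvalues i /
          ((N.β 𝒯) * (N.β 𝒯).conjTranspose).trace.re)

/-- The maximal entanglement entropy between inputs and outputs over all tensor
assignments (with nonzero contracted state). -/
noncomputable def MEE (N : TN) : ℝ :=
  sSup {x : ℝ | ∃ 𝒯 : N.Assignment, N.β 𝒯 ≠ 0 ∧ x = N.EE 𝒯}

end TN

/-!
The entropy of a state is at most the logarithm of the rank of its coefficient matrix, and a cut
bounds this rank by the product of its capacities: cutting splits the contraction into two factors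
that share only the indices of the cut edges.

For the lower bound, view an edge of capacity `d ^ m` as a bundle of `m` wires, each carrying one of
`d` letters. If every cut contains at least `k` wires, Menger's theorem yields `k` disjoint paths of
wires from the inputs to the outputs. Let each tensor test that the letters agree along the paths
and are a default letter off the paths. The contracted matrix then counts the labellings with
given letters at the inputs and outputs. Its largest eigenvalue is controlled by row and column
sums, its trace by the number of labellings, and the quotient shows that no Schmidt weight exceeds
`d ^ (-k)`. So the entropy is at least `k log d`, which is the logarithm of the minimal cut.
-/

section Entropy

open Real

theorem sum_negMulLog_le_log_card {ι : Type*} {s : Finset ι} {p : ι → ℝ}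
    (hp : ∀ i ∈ s, 0 ≤ p i) (hsum : ∑ i ∈ s, p i = 1) :
    ∑ i ∈ s, negMulLog (p i) ≤ log s.card := by
  have hs : s.Nonempty := Finset.nonempty_of_sum_ne_zero (hsum.trans_ne one_ne_zero)
  have hcard : (0 : ℝ) < s.card := by exact_mod_cast hs.card_pos
  have jensen := concaveOn_negMulLog.le_map_sum (t := s) (w := fun _ => (s.card : ℝ)⁻¹) (p := p)
    (fun _ _ => by positivity) (by simp [hcard.ne']) hp
  simp only [smul_eq_mul, ← Finset.mul_sum, hsum, mul_one, negMulLog, log_inv, neg_mul_neg]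
    at jensen
  exact le_of_mul_le_mul_left jensen (inv_pos.2 hcard)

theorem log_le_sum_negMulLog {ι : Type*} {s : Finset ι} {p : ι → ℝ} {D : ℝ}
    (hp : ∀ i ∈ s, 0 ≤ p i) (hpD : ∀ i ∈ s, p i ≤ D⁻¹) (hsum : ∑ i ∈ s, p i = 1) :
    log D ≤ ∑ i ∈ s, negMulLog (p i) := by
  calc log D = ∑ i ∈ s, p i * log D := by rw [← Finset.sum_mul, hsum, one_mul]
    _ ≤ ∑ i ∈ s, negMulLog (p i) := Finset.sum_le_sum fun i hi => ?_
  rcases (hp i hi).eq_or_lt with hzero | hpos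
  · simp [← hzero]
  · have hlog : log (p i) ≤ -log D := log_inv D ▸ log_le_log hpos (hpD i hi)
    calc p i * log D ≤ p i * -log (p i) := by gcongr; linarith
      _ = negMulLog (p i) := by rw [negMulLog]; ring

end Entropy

section SchmidtSpectrum

open Real Matrix
open scoped ComplexOrder

variable {m n : Type*} [Fintype m] [Fintype n]

theorem trace_mul_conjTranspose_re (C : Matrix m n ℂ) :
    (C * Cᴴ).trace.re = ∑ i, ∑ j, ‖C i j‖ ^ 2 := by
  simp [trace, mul_apply, Complex.mul_conj, Complex.normSq_eq_norm_sq, -Complex.ofReal_pow]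

theorem trace_mul_conjTranspose_re_pos {C : Matrix m n ℂ} (hC : C ≠ 0) :
    0 < (C * Cᴴ).trace.re := by
  obtain ⟨i, j, hij⟩ : ∃ i j, C i j ≠ 0 := by
    contrapose! hC
    exact Matrix.ext hC
  rw [trace_mul_conjTranspose_re]
  exact Finset.sum_pos' (fun _ _ => by positivity) ⟨i, Finset.mem_univ i,
    Finset.sum_pos' (fun _ _ => by positivity) ⟨j, Finset.mem_univ j, by positivity⟩⟩

open scoped Matrix.Norms.Operator in
theorem linfty_opNorm_le {C : Matrix m n ℂ} {K : ℝ} (hK : 0 ≤ K)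
    (hrow : ∀ i, ∑ j, ‖C i j‖ ≤ K) : ‖C‖ ≤ K := by
  lift K to NNReal using hK
  rw [linfty_opNorm_def, NNReal.coe_le_coe]
  exact Finset.sup_le fun i _ => NNReal.coe_le_coe.1 (by simpa using hrow i)

variable [DecidableEq m]

/-- The Schmidt spectrum of the bipartite pure state with coefficient matrix `C`: the eigenvalues of
its reduced density matrix `C Cᴴ / Tr (C Cᴴ)`, indexed by the rows of `C`. It is `0` if `C = 0`. -/
noncomputable def schmidtWeight (C : Matrix m n ℂ) (i : m) : ℝ :=
  (isHermitian_mul_conjTranspose_self C).eigenvalues i / (C * Cᴴ).trace.re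

variable {C : Matrix m n ℂ}

theorem schmidtWeight_nonneg (hC : C ≠ 0) (i : m) : 0 ≤ schmidtWeight C i :=
  div_nonneg (eigenvalues_self_mul_conjTranspose_nonneg C i) (trace_mul_conjTranspose_re_pos hC).le

theorem sum_schmidtWeight (hC : C ≠ 0) : ∑ i, schmidtWeight C i = 1 := by
  have htrace : ∑ i, (isHermitian_mul_conjTranspose_self C).eigenvalues i = (C * Cᴴ).trace.re := by
    simp [(isHermitian_mul_conjTranspose_self C).trace_eq_sum_eigenvalues]
  simp only [schmidtWeight, ← Finset.sum_div, htrace]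
  exact div_self (trace_mul_conjTranspose_re_pos hC).ne'

theorem card_schmidtWeight_ne_zero (hC : C ≠ 0) :
    (Finset.univ.filter fun i => schmidtWeight C i ≠ 0).card = C.rank := by
  rw [← rank_self_mul_conjTranspose C,
    (isHermitian_mul_conjTranspose_self C).rank_eq_card_non_zero_eigs, Fintype.card_subtype]
  simp [schmidtWeight, (trace_mul_conjTranspose_re_pos hC).ne']

theorem sum_negMulLog_schmidtWeight_le_log_rank (hC : C ≠ 0) :
    ∑ i, negMulLog (schmidtWeight C i) ≤ log C.rank := by
  have sum_support : ∀ f : ℝ → ℝ, f 0 = 0 →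
      ∑ i with schmidtWeight C i ≠ 0, f (schmidtWeight C i) = ∑ i, f (schmidtWeight C i) :=
    fun f hf => Finset.sum_filter_of_ne fun i _ => mt fun h => h ▸ hf
  rw [← card_schmidtWeight_ne_zero hC, ← sum_support negMulLog negMulLog_zero]
  exact sum_negMulLog_le_log_card (fun i _ => schmidtWeight_nonneg hC i)
    ((sum_support id rfl).trans (sum_schmidtWeight hC))

open scoped Matrix.Norms.Operator in
theorem eigenvalues_mul_conjTranspose_le {K₁ K₂ : ℝ} (hrow : ∀ i, ∑ j, ‖C i j‖ ≤ K₁)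
    (hcol : ∀ j, ∑ i, ‖C i j‖ ≤ K₂) (hK₂ : 0 ≤ K₂) (i : m) :
    (isHermitian_mul_conjTranspose_self C).eigenvalues i ≤ K₁ * K₂ := by
  have : Nonempty m := ⟨i⟩
  have hK₁ : 0 ≤ K₁ := (Finset.sum_nonneg fun _ _ => norm_nonneg _).trans (hrow i)
  calc (isHermitian_mul_conjTranspose_self C).eigenvalues i
      ≤ ‖C * Cᴴ‖ := (le_norm_self _).trans <| spectrum.norm_le_norm_of_mem
        ((isHermitian_mul_conjTranspose_self C).eigenvalues_mem_spectrum_real i)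
    _ ≤ ‖C‖ * ‖Cᴴ‖ := linfty_opNorm_mul C Cᴴ
    _ ≤ K₁ * K₂ := by
      gcongr
      · exact linfty_opNorm_le hK₁ hrow
      · exact linfty_opNorm_le hK₂ (by simpa using hcol)

theorem log_le_sum_negMulLog_schmidtWeight {D K₁ K₂ : ℝ} (hC : C ≠ 0) (hD : 0 < D) (hK₂ : 0 ≤ K₂)
    (hrow : ∀ i, ∑ j, ‖C i j‖ ≤ K₁) (hcol : ∀ j, ∑ i, ‖C i j‖ ≤ K₂)
    (htrace : D * (K₁ * K₂) ≤ (C * Cᴴ).trace.re) :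
    log D ≤ ∑ i, negMulLog (schmidtWeight C i) := by
  refine log_le_sum_negMulLog (fun i _ => schmidtWeight_nonneg hC i) (fun i _ => ?_)
    (sum_schmidtWeight hC)
  rw [schmidtWeight, div_le_iff₀ (trace_mul_conjTranspose_re_pos hC), inv_mul_eq_div,
    le_div_iff₀' hD]
  exact (mul_le_mul_of_nonneg_left (eigenvalues_mul_conjTranspose_le hrow hcol hK₂ i) hD.le).trans
    htrace

end SchmidtSpectrum

section CountMatrix

open Finset Real Matrix

variable {Ω m n : Type*} [Fintype Ω] [DecidableEq m] [DecidableEq n]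

/-- The joint histogram of two maps `b` and `a`: the entry at `(i, j)` counts the points that `b`
sends to `i` and `a` to `j`. It is the coefficient matrix of the state `∑ ω, |b ω⟩ ⊗ |a ω⟩`. -/
noncomputable def countMatrix (b : Ω → m) (a : Ω → n) : Matrix m n ℂ :=
  of fun i j => (#{ω | b ω = i ∧ a ω = j} : ℂ)

theorem norm_countMatrix_apply (b : Ω → m) (a : Ω → n) (i : m) (j : n) :
    ‖countMatrix b a i j‖ = #{ω | b ω = i ∧ a ω = j} := by
  simp [countMatrix]

theorem countMatrix_ne_zero [Nonempty Ω] (b : Ω → m) (a : Ω → n) : countMatrix b a ≠ 0 := by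
  inhabit Ω
  intro hzero
  have hentry := congrFun₂ hzero (b default) (a default)
  simp only [countMatrix, of_apply, Matrix.zero_apply, Nat.cast_eq_zero, card_eq_zero] at hentry
  exact (filter_eq_empty_iff.1 hentry (mem_univ default)) ⟨rfl, rfl⟩

theorem sum_norm_countMatrix_row [Fintype n] (b : Ω → m) (a : Ω → n) (i : m) :
    ∑ j, ‖countMatrix b a i j‖ = #{ω | b ω = i} := by
  simp_rw [norm_countMatrix_apply, ← filter_filter]
  exact_mod_cast (card_eq_sum_card_fiberwise fun _ _ => mem_univ _).symm

theorem sum_norm_countMatrix_col [Fintype m] (b : Ω → m) (a : Ω → n) (j : n) :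
    ∑ i, ‖countMatrix b a i j‖ = #{ω | a ω = j} := by
  rw [← sum_norm_countMatrix_row a b]
  simp_rw [norm_countMatrix_apply, and_comm]

theorem card_le_trace_countMatrix [Fintype m] [Fintype n] (b : Ω → m) (a : Ω → n) :
    (Fintype.card Ω : ℝ) ≤ (countMatrix b a * (countMatrix b a)ᴴ).trace.re := by
  calc (Fintype.card Ω : ℝ) = ∑ i, (#{ω | b ω = i} : ℝ) := by
        exact_mod_cast card_eq_sum_card_fiberwise fun _ _ => mem_univ _
    _ = ∑ i, ∑ j, ‖countMatrix b a i j‖ := by simp_rw [sum_norm_countMatrix_row]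
    _ ≤ ∑ i, ∑ j, ‖countMatrix b a i j‖ ^ 2 := by
        gcongr with i _ j _
        rw [norm_countMatrix_apply]
        exact_mod_cast Nat.le_self_pow two_ne_zero _
    _ = _ := (trace_mul_conjTranspose_re _).symm

theorem log_le_sum_negMulLog_countMatrix [Fintype m] [Fintype n] {D K₁ K₂ : ℕ}
    {b : Ω → m} {a : Ω → n} (hD : 0 < D) (hΩ : 0 < Fintype.card Ω)
    (hb : ∀ i, #{ω | b ω = i} ≤ K₁) (ha : ∀ j, #{ω | a ω = j} ≤ K₂)
    (hcard : D * (K₁ * K₂) ≤ Fintype.card Ω) :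
    log D ≤ ∑ i, negMulLog (schmidtWeight (countMatrix b a) i) := by
  have : Nonempty Ω := Fintype.card_pos_iff.1 hΩ
  refine log_le_sum_negMulLog_schmidtWeight (K₁ := K₁) (K₂ := K₂) (countMatrix_ne_zero b a)
    (by exact_mod_cast hD) K₂.cast_nonneg (fun i => ?_) (fun j => ?_)
    (le_trans (by exact_mod_cast hcard) (card_le_trace_countMatrix b a))
  · rw [sum_norm_countMatrix_row]
    exact_mod_cast hb i
  · rw [sum_norm_countMatrix_col]
    exact_mod_cast ha j

variable {κ α : Type*} [Fintype κ] [DecidableEq κ] [Fintype α]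

theorem card_filter_eq_le_pow {s : Finset κ} {a : (κ → α) → n}
    (hs : ∀ f g, a f = a g → ∀ i ∈ s, f i = g i) (j : n) :
    #{f | a f = j} ≤ Fintype.card α ^ #sᶜ := by
  let restrict : (κ → α) → (↥sᶜ → α) := fun f i => f i
  calc #{f | a f = j} ≤ #(univ : Finset (↥sᶜ → α)) := by
        refine card_le_card_of_injOn restrict (fun _ _ => mem_univ _) fun f hf g hg hfg => ?_
        simp only [coe_filter, mem_univ, true_and, Set.mem_ofPred_eq] at hf hg
        ext1 i
        by_cases hi : i ∈ s
        · exact hs f g (hf.trans hg.symm) i hi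
        · exact congrFun hfg ⟨i, mem_compl.2 hi⟩
    _ = Fintype.card α ^ #sᶜ := by rw [card_univ, Fintype.card_fun, Fintype.card_coe]

theorem card_inter_add_card_compl_add_card_compl {s t : Finset κ} (hst : s ∪ t = univ) :
    #(s ∩ t) + (#tᶜ + #sᶜ) = Fintype.card κ := by
  have hcard := card_union_add_card_inter s t
  rw [hst, card_univ] at hcard
  have := s.card_add_card_compl
  have := t.card_add_card_compl
  lia

theorem log_card_pow_le_sum_negMulLog_countMatrix [Nonempty α] [Fintype m] [Fintype n]
    {b : (κ → α) → m} {a : (κ → α) → n} {s t : Finset κ} (hst : s ∪ t = univ)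
    (ha : ∀ f g, a f = a g → ∀ i ∈ s, f i = g i) (hb : ∀ f g, b f = b g → ∀ i ∈ t, f i = g i) :
    log ((Fintype.card α ^ #(s ∩ t) : ℕ) : ℝ) ≤
      ∑ i, negMulLog (schmidtWeight (countMatrix b a) i) := by
  refine log_le_sum_negMulLog_countMatrix (pow_pos Fintype.card_pos _) Fintype.card_pos
    (card_filter_eq_le_pow hb) (card_filter_eq_le_pow ha) (le_of_eq ?_)
  rw [← pow_add, ← pow_add, card_inter_add_card_compl_add_card_compl hst, Fintype.card_fun]

end CountMatrix

section MatrixRank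

theorem rank_pos_of_ne_zero {m n K : Type*} [Fintype n] [Field K] {M : Matrix m n K}
    (hM : M ≠ 0) : 0 < M.rank := by
  rw [Nat.pos_iff_ne_zero, Matrix.rank, Ne, Submodule.finrank_eq_zero, LinearMap.range_eq_bot]
  refine mt (fun hzero => ?_) hM
  exact Matrix.ext_of_mulVec_single fun j => by
    rw [Matrix.zero_mulVec, ← Matrix.mulVecLin_apply, hzero, LinearMap.zero_apply]

variable {m n R : Type*} [Fintype n] [CommSemiring R] [StrongRankCondition R]

theorem rank_le_card_of_factorsThrough {q : Type*} [Fintype q] {M : Matrix m n R} {r : n → q}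
    (hM : ∀ i, (M i).FactorsThrough r) : M.rank ≤ Fintype.card q := by
  let M' : Matrix m q R := .of fun i => Function.extend r (M i) 0
  have hM' : M = M'.submatrix id r := Matrix.ext fun i j => ((hM i).extend_apply 0 j).symm
  exact hM' ▸ (Matrix.rank_submatrix_le _ _ _).trans (Matrix.rank_le_card_width _)

theorem rank_sum_mul_le_card_of_dependsOn {E : Type*} [Fintype E] [DecidableEq E] {κ : E → Type*}
    [∀ e, Fintype (κ e)] {s t : Set E} {Ψ : m → (∀ e, κ e) → R} {Φ : n → (∀ e, κ e) → R}
    (hΨ : ∀ i, DependsOn (Ψ i) t) (hΦ : ∀ j, DependsOn (Φ j) s) :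
    (Matrix.of fun i j => ∑ W, Ψ i W * Φ j W).rank ≤ Fintype.card (∀ e : ↥(s ∩ t), κ e) := by
  choose φ hφ using fun j => dependsOn_iff_exists_comp.1 (hΦ j)
  let split := Equiv.piEquivPiSubtypeProd (· ∈ s) κ
  let B : Matrix m (∀ e : s, κ e) R := .of fun i a => ∑ b, Ψ i (split.symm (a, b))
  let C : Matrix (∀ e : s, κ e) n R := .of fun a j => φ j a
  have hfactor : (Matrix.of fun i j => ∑ W, Ψ i W * Φ j W) = B * C := by
    ext i j
    simp only [Matrix.of_apply, Matrix.mul_apply, B, C, Finset.sum_mul]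
    rw [← Fintype.sum_prod_type']
    refine Fintype.sum_equiv split _ _ fun W => ?_
    rw [hφ, Prod.mk.eta, split.symm_apply_apply]
    rfl
  have hB : ∀ i, (B i).FactorsThrough fun a (e : ↥(s ∩ t)) => a ⟨e, e.2.1⟩ := by
    refine fun i a a' haa' => Finset.sum_congr rfl fun b _ => hΨ i fun e het => ?_
    by_cases hes : e ∈ s
    · simpa [split, Equiv.piEquivPiSubtypeProd, hes] using congrFun haa' ⟨e, hes, het⟩
    · simp [split, Equiv.piEquivPiSubtypeProd, hes]
  exact hfactor ▸ (Matrix.rank_mul_le_left B C).trans (rank_le_card_of_factorsThrough hB)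

end MatrixRank

section Menger

open Relation

variable {X : Type*} {r r' : X → X → Prop} {A B L Q P S : Set X} {a b x y : X}

/-- `(L, Q)` separates `A` from `B` in the directed graph `r`: the two sets cover the vertices,
`A ⊆ L`, `B ⊆ Q`, and no edge leads from `L \ Q` to `Q \ L`. Its order is `(L ∩ Q).ncard`. -/
structure IsSeparation (r : X → X → Prop) (A B L Q : Set X) : Prop where
  mem_or_mem : ∀ x, x ∈ L ∨ x ∈ Q
  left_subset : A ⊆ L
  right_subset : B ⊆ Q
  mem_left_of_rel : ∀ ⦃u w⦄, r u w → u ∉ Q → w ∈ L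

namespace IsSeparation

theorem swap (h : IsSeparation r A B L Q) : IsSeparation (flip r) B A Q L where
  mem_or_mem x := (h.mem_or_mem x).symm
  left_subset := h.right_subset
  right_subset := h.left_subset
  mem_left_of_rel _ _ huw hu := by_contra fun hw => hu (h.mem_left_of_rel huw hw)

theorem of_delete_edge (h : IsSeparation r' A B L Q)
    (hr : ∀ u w, r u w → r' u w ∨ u = x ∧ w = y) (hy : y ∈ L) : IsSeparation r A B L Q where
  __ := h
  mem_left_of_rel u w huw hu := by
    rcases hr u w huw with huw' | ⟨-, rfl⟩
    · exact h.mem_left_of_rel huw' hu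
    · exact hy

theorem insert_left (h : IsSeparation r A B L Q) (y : X) :
    IsSeparation r A B (insert y L) Q where
  mem_or_mem z := (h.mem_or_mem z).imp_left (Set.mem_insert_of_mem y)
  left_subset := h.left_subset.trans (Set.subset_insert y L)
  right_subset := h.right_subset
  mem_left_of_rel _ _ huw hu := Set.mem_insert_of_mem y (h.mem_left_of_rel huw hu)

theorem le_ncard_add_one [Finite X] (h : IsSeparation r' A B L Q) {k : ℕ}
    (hk : ∀ L Q, IsSeparation r A B L Q → k ≤ (L ∩ Q).ncard)
    (hr : ∀ u w, r u w → r' u w ∨ u = x ∧ w = y) : k ≤ (L ∩ Q).ncard + 1 :=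
  calc k ≤ (insert y L ∩ Q).ncard :=
        hk _ _ ((h.insert_left y).of_delete_edge hr (Set.mem_insert y L))
    _ ≤ (insert y (L ∩ Q)).ncard :=
        Set.ncard_le_ncard fun _ hz => hz.1.imp_right fun hzL => ⟨hzL, hz.2⟩
    _ ≤ (L ∩ Q).ncard + 1 := Set.ncard_insert_le y _

theorem le_ncard_of_left [Finite X] (h : IsSeparation r' A B L Q) {k : ℕ}
    (hk : ∀ L Q, IsSeparation r A B L Q → k ≤ (L ∩ Q).ncard)
    (hr : ∀ u w, r u w → r' u w ∨ u = x ∧ w = y) {s : X → X → Prop}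
    (hs : ∀ u w, r' u w → u ∈ L → w ∈ L → s u w) {L₁ Q₁ : Set X}
    (h₁ : IsSeparation s A (insert x (L ∩ Q)) L₁ Q₁) : k ≤ (L₁ ∩ Q₁).ncard := by
  have hsep : IsSeparation r A B (L₁ ∩ L) (Q₁ ∪ Q) :=
    { mem_or_mem z := by
        have := h.mem_or_mem z
        have := h₁.mem_or_mem z
        simp only [Set.mem_inter_iff, Set.mem_union]
        tauto
      left_subset := Set.subset_inter h₁.left_subset h.left_subset
      right_subset := h.right_subset.trans Set.subset_union_right
      mem_left_of_rel u w huw hu := by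
        rw [Set.mem_union, not_or] at hu
        rcases hr u w huw with huw' | ⟨rfl, -⟩
        · have huL := (h.mem_or_mem u).resolve_right hu.2
          have hwL := h.mem_left_of_rel huw' hu.2
          exact ⟨h₁.mem_left_of_rel (hs u w huw' huL hwL) hu.1, hwL⟩
        · exact absurd (h₁.right_subset (Set.mem_insert u _)) hu.1 }
  refine (hk _ _ hsep).trans (Set.ncard_le_ncard ?_)
  rintro z ⟨⟨hzL₁, hzL⟩, hzQ₁ | hzQ⟩
  · exact ⟨hzL₁, hzQ₁⟩
  · exact ⟨hzL₁, h₁.right_subset (.inr ⟨hzL, hzQ⟩)⟩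

theorem le_ncard_of_right [Finite X] (h : IsSeparation r' A B L Q) {k : ℕ}
    (hk : ∀ L Q, IsSeparation r A B L Q → k ≤ (L ∩ Q).ncard)
    (hr : ∀ u w, r u w → r' u w ∨ u = x ∧ w = y) {s : X → X → Prop}
    (hs : ∀ u w, r' u w → u ∈ Q → w ∈ Q → s u w) {L₁ Q₁ : Set X}
    (h₁ : IsSeparation s (insert y (L ∩ Q)) B L₁ Q₁) : k ≤ (L₁ ∩ Q₁).ncard := by
  rw [Set.inter_comm L Q] at h₁
  rw [Set.inter_comm]
  exact h.swap.le_ncard_of_left (r := flip r) (fun L Q hLQ => Set.inter_comm Q L ▸ hk Q L hLQ.swap)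
    (fun u w huw => (hr w u huw).imp_right And.symm) (fun u w huw hu hw => hs w u huw hw hu) h₁.swap

end IsSeparation

/-- A path from `a` to `b` in `r`, recorded by its vertex set `P` only: inside `P`, every vertex,
in particular `b`, is reachable from `a`. -/
structure Joins (r : X → X → Prop) (P : Set X) (a b : X) : Prop where
  source_mem : a ∈ P
  target_mem : b ∈ P
  reachable : ∀ x ∈ P, ReflTransGen (fun u w => r u w ∧ u ∈ P ∧ w ∈ P) a x

namespace Joins

theorem singleton (r : X → X → Prop) (a : X) : Joins r {a} a a where
  source_mem := rfl
  target_mem := rfl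
  reachable _ hx := hx ▸ .refl

theorem mono (h : Joins r P a b) (hr : ∀ u w, r u w → r' u w) : Joins r' P a b where
  __ := h
  reachable x hx :=
    ReflTransGen.mono (fun u w huw => ⟨hr u w huw.1, huw.2⟩) _ _ (h.reachable x hx)

theorem union (hP : Joins r P a x) (hS : Joins r S y b) (hxy : x = y ∨ r x y) :
    Joins r (P ∪ S) a b where
  source_mem := .inl hP.source_mem
  target_mem := .inr hS.target_mem
  reachable := by
    have reach_P : ∀ z ∈ P, ReflTransGen (fun u w => r u w ∧ u ∈ P ∪ S ∧ w ∈ P ∪ S) a z :=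
      fun z hz => ReflTransGen.mono (fun _ _ h => ⟨h.1, .inl h.2.1, .inl h.2.2⟩) _ _
        (hP.reachable z hz)
    have reach_y : ReflTransGen (fun u w => r u w ∧ u ∈ P ∪ S ∧ w ∈ P ∪ S) a y := by
      rcases hxy with rfl | hxy
      · exact reach_P x hP.target_mem
      · exact (reach_P x hP.target_mem).tail ⟨hxy, .inl hP.target_mem, .inr hS.source_mem⟩
    rintro z (hz | hz)
    · exact reach_P z hz
    · exact reach_y.trans <| ReflTransGen.mono (fun _ _ h => ⟨h.1, .inr h.2.1, .inr h.2.2⟩) _ _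
        (hS.reachable z hz)

theorem subset (h : Joins r P a b) (ha : a ∈ L) (hL : ∀ u w, r u w → w ∈ L) : P ⊆ L := by
  intro x hx
  rcases (h.reachable x hx).cases_tail with rfl | ⟨_, -, hstep⟩
  · exact ha
  · exact hL _ _ hstep.1

theorem apply_eq_apply_source {Y : Type*} {f : X → Y} (h : Joins r P a b)
    (hf : ∀ u ∈ P, ∀ w ∈ P, r u w → f u = f w) (hx : x ∈ P) : f x = f a := by
  induction h.reachable x hx with
  | refl => rfl
  | tail _ hstep ih => rw [← hf _ hstep.2.1 _ hstep.2.2 hstep.1, ih hstep.2.1]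

end Joins

/-- A family of pairwise disjoint paths from `A` to `B` in `r`, indexed by `ι`. -/
structure Linkage (r : X → X → Prop) (A B : Set X) (ι : Type*) where
  path : ι → Set X
  source : ι → X
  target : ι → X
  source_mem : ∀ i, source i ∈ A
  target_mem : ∀ i, target i ∈ B
  joins : ∀ i, Joins r (path i) (source i) (target i)
  eq_of_mem : ∀ ⦃i j x⦄, x ∈ path i → x ∈ path j → i = j

namespace Linkage

variable {ι κ : Type*}

theorem source_injective (p : Linkage r A B ι) : p.source.Injective := fun i j hij =>
  p.eq_of_mem (p.joins i).source_mem (hij ▸ (p.joins j).source_mem)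

theorem target_injective (p : Linkage r A B ι) : p.target.Injective := fun i j hij =>
  p.eq_of_mem (p.joins i).target_mem (hij ▸ (p.joins j).target_mem)

/-- The same paths, indexed through an injection. -/
def reindex (p : Linkage r A B ι) (e : κ ↪ ι) : Linkage r A B κ where
  path := p.path ∘ e
  source := p.source ∘ e
  target := p.target ∘ e
  source_mem i := p.source_mem (e i)
  target_mem i := p.target_mem (e i)
  joins i := p.joins (e i)
  eq_of_mem _ _ _ hi hj := e.injective (p.eq_of_mem hi hj)

/-- The same paths, in a larger graph. -/
def mono (p : Linkage r A B ι) (hr : ∀ u w, r u w → r' u w) : Linkage r' A B ι where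
  __ := p
  joins i := (p.joins i).mono hr

/-- The one-vertex paths on the vertices of `A ∩ B`. -/
def singletons (r : X → X → Prop) (A B : Set X) : Linkage r A B ↥(A ∩ B) where
  path z := {z.1}
  source z := z
  target z := z
  source_mem z := z.2.1
  target_mem z := z.2.2
  joins z := .singleton r z
  eq_of_mem _ _ _ hi hj := Subtype.ext (hi.symm.trans hj)

/-- Concatenation of a linkage inside `L` with a linkage inside `Q`: path `i` of the first is
continued by path `i` of the second, possibly across an edge. The result is disjoint because each
vertex of `L ∩ Q` is where two paths with the same index meet. -/
def concat {A' B' : Set X} (p : Linkage r A B' ι) (q : Linkage r A' B ι)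
    (hp : ∀ i, p.path i ⊆ L) (hq : ∀ i, q.path i ⊆ Q)
    (hstep : ∀ i, p.target i = q.source i ∨ r (p.target i) (q.source i))
    (hmeet : ∀ z ∈ L ∩ Q, ∃ i, p.target i = z ∧ q.source i = z) : Linkage r A B ι where
  path i := p.path i ∪ q.path i
  source := p.source
  target := q.target
  source_mem := p.source_mem
  target_mem := q.target_mem
  joins i := (p.joins i).union (q.joins i) (hstep i)
  eq_of_mem := by
    have eq_of_mem_of_mem : ∀ {i j z}, z ∈ p.path i → z ∈ q.path j → i = j := by
      intro i j z hi hj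
      obtain ⟨o, rfl, ho⟩ := hmeet z ⟨hp i hi, hq j hj⟩
      have hio : i = o := p.eq_of_mem hi (p.joins o).target_mem
      have hoj : o = j := q.eq_of_mem (q.joins o).source_mem (ho ▸ hj)
      exact hio.trans hoj
    rintro i j z (hi | hi) (hj | hj)
    · exact p.eq_of_mem hi hj
    · exact eq_of_mem_of_mem hi hj
    · exact (eq_of_mem_of_mem hj hi).symm
    · exact q.eq_of_mem hi hj

end Linkage

theorem exists_equiv_option_apply_eq {ι : Type*} [Finite ι] {Z : Set X} [Finite Z] {t : ι → X}
    {v : X} (ht : t.Injective) (htZ : ∀ i, t i ∈ insert v Z) (hcard : Z.ncard + 1 = Nat.card ι) :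
    ∃ e : Option Z ≃ ι, t (e none) = v ∧ ∀ z, t (e (some z)) = z := by
  let f : Option Z → X := fun o => o.elim v (↑)
  have hf : ∀ i, ∃ o, f o = t i := fun i => by
    rcases htZ i with hi | hi
    · exact ⟨none, hi.symm⟩
    · exact ⟨some ⟨t i, hi⟩, rfl⟩
  choose g hg using hf
  have hg_inj : g.Injective := fun i j hij => ht (by rw [← hg, ← hg, hij])
  have card_option : Nat.card (Option Z) = Nat.card ι := by
    rw [Finite.card_option, Nat.card_coe_set_eq, hcard]
  let e := Equiv.ofBijective g (hg_inj.bijective_of_nat_card_le card_option.le)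
  have he : ∀ o, t (e.symm o) = f o := fun o => by
    rw [← hg]; exact congrArg f (e.apply_symm_apply o)
  exact ⟨e.symm, he none, fun z => he (some z)⟩

theorem exists_linkage_of_forall_not_rel [Finite X] {k : ℕ} (hr : ∀ u w, ¬ r u w)
    (hk : ∀ L Q, IsSeparation r A B L Q → k ≤ (L ∩ Q).ncard) :
    Nonempty (Linkage r A B (Fin k)) := by
  have hsep : IsSeparation r A B A (Aᶜ ∪ B) :=
    { mem_or_mem x := (em (x ∈ A)).imp_right .inl
      left_subset := subset_rfl
      right_subset := Set.subset_union_right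
      mem_left_of_rel u w huw := absurd huw (hr u w) }
  have hcard : k ≤ Nat.card ↥(A ∩ B) := by simpa [Set.inter_union_distrib_left] using hk _ _ hsep
  exact ⟨(Linkage.singletons r A B).reindex
    ((Fin.castLEEmb hcard).trans (Finite.equivFin _).symm.toEmbedding)⟩

theorem exists_linkage_of_tight_separation [Finite X] {k : ℕ} (hr : ∀ u w, r' u w → r u w)
    (hxy : r x y) (hA : A ⊆ L) (hy : y ∈ Q) (hcard : (L ∩ Q).ncard + 1 = k)
    (p : Linkage (fun u w => r' u w ∧ u ∈ L ∧ w ∈ L) A (insert x (L ∩ Q)) (Fin k))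
    (q : Linkage (fun u w => r' u w ∧ u ∈ Q ∧ w ∈ Q) (insert y (L ∩ Q)) B (Fin k)) :
    Nonempty (Linkage r A B (Fin k)) := by
  rw [← Nat.card_fin k] at hcard
  obtain ⟨e, he_none, he_some⟩ := exists_equiv_option_apply_eq p.target_injective p.target_mem hcard
  obtain ⟨e', he'_none, he'_some⟩ :=
    exists_equiv_option_apply_eq q.source_injective q.source_mem hcard
  have path_subset_L : ∀ i, p.path i ⊆ L := fun i =>
    (p.joins i).subset (hA (p.source_mem i)) fun _ _ huw => huw.2.2
  have path_subset_Q : ∀ i, q.path i ⊆ Q := fun i =>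
    (q.joins i).subset (Set.insert_subset hy Set.inter_subset_right (q.source_mem i))
      fun _ _ huw => huw.2.2
  let p' := (p.reindex e.toEmbedding).mono fun u w huw => hr u w huw.1
  let q' := (q.reindex e'.toEmbedding).mono fun u w huw => hr u w huw.1
  have step : ∀ o, p'.target o = q'.source o ∨ r (p'.target o) (q'.source o)
    | none => .inr (he_none.symm ▸ he'_none.symm ▸ hxy)
    | some z => .inl ((he_some z).trans (he'_some z).symm)
  have meet : ∀ z ∈ L ∩ Q, ∃ o, p'.target o = z ∧ q'.source o = z := fun z hz =>
    ⟨some ⟨z, hz⟩, he_some _, he'_some _⟩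
  have glued : Linkage r A B (Option ↥(L ∩ Q)) :=
    p'.concat q' (fun o => path_subset_L (e o)) (fun o => path_subset_Q (e' o)) step meet
  exact ⟨glued.reindex e.symm.toEmbedding⟩

-- Menger's theorem, by Göring's induction: if deleting the edge from `x` to `y` creates a
-- separation of order less than `k`, its order is `k - 1`. Adding `x` or `y` to its intersection,
-- one links `A` to this intersection and the intersection to `B`, and concatenates across the
-- deleted edge.
theorem exists_linkage [Finite X] {k : ℕ}
    (hk : ∀ L Q, IsSeparation r A B L Q → k ≤ (L ∩ Q).ncard) :
    Nonempty (Linkage r A B (Fin k)) := by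
  induction r using WellFoundedLT.induction generalizing A B k with | _ r ih
  by_cases hno : ∀ u w, ¬ r u w
  · exact exists_linkage_of_forall_not_rel hno hk
  push Not at hno
  obtain ⟨x, y, hxy⟩ := hno
  let r' : X → X → Prop := fun u w => r u w ∧ ¬ (u = x ∧ w = y)
  have hr : ∀ u w, r u w → r' u w ∨ u = x ∧ w = y := fun u w huw => by tauto
  have lt_of_le_r' : ∀ s : X → X → Prop, (∀ u w, s u w → r' u w) → s < r := fun s hs =>
    lt_of_le_not_ge (fun u w huw => (hs u w huw).1) fun hle => (hs x y (hle x y hxy)).2 ⟨rfl, rfl⟩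
  by_cases hk' : ∀ L Q, IsSeparation r' A B L Q → k ≤ (L ∩ Q).ncard
  · obtain ⟨p⟩ := ih r' (lt_of_le_r' r' fun _ _ => id) hk'
    exact ⟨p.mono fun _ _ huw => huw.1⟩
  push Not at hk'
  obtain ⟨L, Q, hLQ, hlt⟩ := hk'
  have hy : y ∉ L := fun hyL => hlt.not_ge (hk L Q (hLQ.of_delete_edge hr hyL))
  obtain ⟨p⟩ := ih (fun u w => r' u w ∧ u ∈ L ∧ w ∈ L) (lt_of_le_r' _ fun _ _ => And.left)
    fun _ _ => hLQ.le_ncard_of_left hk hr fun _ _ huw hu hw => ⟨huw, hu, hw⟩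
  obtain ⟨q⟩ := ih (fun u w => r' u w ∧ u ∈ Q ∧ w ∈ Q) (lt_of_le_r' _ fun _ _ => And.left)
    fun _ _ => hLQ.le_ncard_of_right hk hr fun _ _ huw hu hw => ⟨huw, hu, hw⟩
  exact exists_linkage_of_tight_separation (fun _ _ => And.left) hxy hLQ.left_subset
    ((hLQ.mem_or_mem y).resolve_left hy) (le_antisymm hlt (hLQ.le_ncard_add_one hk hr)) p q

end Menger

namespace TN

variable (N : TN)

section RankBound

/-- An end of the edge `e` is attached to the vertex or open end `n`. -/
def Incident (e : N.E) (n : N.V ⊕ N.S ⊕ N.T) : Prop := ∃ i, N.ends e i = n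

variable {N}

theorem incident_inr_inl_iff {e : N.E} {u : N.S} :
    N.Incident e (.inr (.inl u)) ↔ e = N.inEdge u where
  mp := fun ⟨i, hi⟩ => congrArg Prod.fst ((N.openS u).choose_spec.2 (e, i) hi)
  mpr := fun he => he ▸ ⟨(N.openS u).choose.2, (N.openS u).choose_spec.1⟩

theorem incident_inr_inr_iff {e : N.E} {u : N.T} :
    N.Incident e (.inr (.inr u)) ↔ e = N.outEdge u where
  mp := fun ⟨i, hi⟩ => congrArg Prod.fst ((N.openT u).choose_spec.2 (e, i) hi)
  mpr := fun he => he ▸ ⟨(N.openT u).choose.2, (N.openT u).choose_spec.1⟩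

/-- The edges with an end on side `σ` of the bipartition `f` of vertices and open ends. -/
def touching (f : N.V ⊕ N.S ⊕ N.T → Bool) (σ : Bool) : Set N.E :=
  {e | ∃ n, N.Incident e n ∧ f n = σ}

theorem mem_touching_inter_iff {f : N.V ⊕ N.S ⊕ N.T → Bool} {e : N.E} :
    e ∈ touching f false ∩ touching f true ↔ f (N.ends e 0) ≠ f (N.ends e 1) := by
  simp only [touching, Incident, Fin.exists_fin_two, Set.mem_inter_iff, Set.mem_ofPred_eq]
  grind

theorem dependsOn_prod_touching (𝒯 : N.Assignment) (f : N.V ⊕ N.S ⊕ N.T → Bool) (σ : Bool) :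
    DependsOn (fun W : ∀ e, Fin (N.c e) => ∏ v with f (.inl v) = σ, 𝒯 v fun p => W p.1.1)
      (touching f σ) := by
  intro W W' hW
  refine Finset.prod_congr rfl fun v hv => congrArg (𝒯 v) (funext fun p => hW _ ?_)
  exact ⟨.inl v, ⟨p.1.2, p.2⟩, (Finset.mem_filter.1 hv).2⟩

theorem rank_β_le_prod_of_isCutSet (𝒯 : N.Assignment) {C : Finset N.E} (hC : N.IsCutSet C) :
    (N.β 𝒯).rank ≤ ∏ e ∈ C, N.c e := by
  obtain ⟨f, hfS, hfT, hfC⟩ := hC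
  let half (σ : Bool) (W : ∀ e, Fin (N.c e)) : ℂ := ∏ v with f (.inl v) = σ, 𝒯 v fun p => W p.1.1
  let Φ (j : N.InIdx) (W : ∀ e, Fin (N.c e)) : ℂ :=
    if ∀ u, W (N.inEdge u) = j u then half false W else 0
  let Ψ (i : N.OutIdx) (W : ∀ e, Fin (N.c e)) : ℂ :=
    if ∀ u, W (N.outEdge u) = i u then half true W else 0
  have hβ : N.β 𝒯 = .of fun i j => ∑ W, Ψ i W * Φ j W := by
    ext i j
    refine Finset.sum_congr rfl fun W _ => ?_
    have hsplit : ∏ v, 𝒯 v (fun p => W p.1.1) = half true W * half false W := by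
      simp [half, ← Finset.prod_filter_mul_prod_filter_not Finset.univ fun v => f (.inl v) = true]
    simp only [Ψ, Φ, hsplit, ite_and, ite_mul, zero_mul, mul_ite, mul_zero]
  have hΦ : ∀ j, DependsOn (Φ j) (touching f false) := fun j W W' hW => by
    have hin : ∀ u, W (N.inEdge u) = W' (N.inEdge u) := fun u =>
      hW _ ⟨_, incident_inr_inl_iff.2 rfl, hfS u⟩
    simp only [Φ, hin, half, dependsOn_prod_touching 𝒯 f false hW]
  have hΨ : ∀ i, DependsOn (Ψ i) (touching f true) := fun i W W' hW => by
    have hout : ∀ u, W (N.outEdge u) = W' (N.outEdge u) := fun u =>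
      hW _ ⟨_, incident_inr_inr_iff.2 rfl, hfT u⟩
    simp only [Ψ, hout, half, dependsOn_prod_touching 𝒯 f true hW]
  calc (N.β 𝒯).rank ≤ Fintype.card (∀ e : ↥(touching f false ∩ touching f true), Fin (N.c e)) :=
        hβ ▸ rank_sum_mul_le_card_of_dependsOn hΨ hΦ
    _ = ∏ e ∈ C, N.c e := by
        rw [Fintype.card_pi]
        simp only [Fintype.card_fin]
        exact (Finset.prod_subtype C (fun e => (hfC e).trans mem_touching_inter_iff.symm) N.c).symm

end RankBound

section MinCut

variable {N}

theorem isCutSet_filter {f : N.V ⊕ N.S ⊕ N.T → Bool} (hS : ∀ u, f (.inr (.inl u)) = false)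
    (hT : ∀ u, f (.inr (.inr u)) = true) :
    N.IsCutSet {e | f (N.ends e 0) ≠ f (N.ends e 1)} :=
  ⟨f, hS, hT, fun e => by simp⟩

variable (N) in
theorem exists_isCutSet : ∃ C, N.IsCutSet C :=
  ⟨_, isCutSet_filter (f := Sum.elim (fun _ => true) (Sum.elim (fun _ => false) fun _ => true))
    (fun _ => rfl) (fun _ => rfl)⟩

variable (N) in
theorem exists_isCutSet_prod_eq_QMC : ∃ C, N.IsCutSet C ∧ N.QMC = ∏ e ∈ C, N.c e :=
  let ⟨C, hC⟩ := N.exists_isCutSet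
  Nat.sInf_mem (s := {m | ∃ C, N.IsCutSet C ∧ m = ∏ e ∈ C, N.c e}) ⟨_, C, hC, rfl⟩

theorem QMC_le_prod_of_isCutSet {C : Finset N.E} (hC : N.IsCutSet C) : N.QMC ≤ ∏ e ∈ C, N.c e :=
  Nat.sInf_le ⟨C, hC, rfl⟩

theorem rank_β_le_QMC (𝒯 : N.Assignment) : (N.β 𝒯).rank ≤ N.QMC := by
  obtain ⟨C, hC, hQMC⟩ := N.exists_isCutSet_prod_eq_QMC
  exact hQMC ▸ rank_β_le_prod_of_isCutSet 𝒯 hC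

end MinCut

section EntropyUpperBound

variable {N}

theorem EE_eq_sum_negMulLog (𝒯 : N.Assignment) :
    N.EE 𝒯 = ∑ i, Real.negMulLog (schmidtWeight (N.β 𝒯) i) := by
  simp only [EE, schmidtWeight, Real.negMulLog, neg_mul, Finset.sum_neg_distrib]

theorem EE_le_log_QMC {𝒯 : N.Assignment} (h𝒯 : N.β 𝒯 ≠ 0) : N.EE 𝒯 ≤ Real.log N.QMC := by
  have hrank := rank_pos_of_ne_zero h𝒯
  calc N.EE 𝒯 ≤ Real.log (N.β 𝒯).rank :=
        (EE_eq_sum_negMulLog 𝒯).trans_le (sum_negMulLog_schmidtWeight_le_log_rank h𝒯)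
    _ ≤ Real.log N.QMC :=
        Real.log_le_log (by exact_mod_cast hrank) (by exact_mod_cast rank_β_le_QMC 𝒯)

end EntropyUpperBound

section Wires

/-- The wires of the network when edge `e` is a bundle of `m e` parallel wires, that is, when its
index is a string of `m e` letters of a fixed alphabet. -/
abbrev Wire (m : N.E → ℕ) : Type := Σ e : N.E, Fin (m e)

/-- The wires that end at an input. -/
def inWires (m : N.E → ℕ) : Set (N.Wire m) := {x | ∃ u, x.1 = N.inEdge u}

/-- The wires that end at an output. -/
def outWires (m : N.E → ℕ) : Set (N.Wire m) := {x | ∃ u, x.1 = N.outEdge u}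

/-- Two wires are adjacent if they meet at an internal vertex. -/
def WireAdj (m : N.E → ℕ) (x y : N.Wire m) : Prop :=
  ∃ v, N.Incident x.1 (.inl v) ∧ N.Incident y.1 (.inl v)

variable {N} {m : N.E → ℕ}

theorem exists_isCutSet_sum_le_ncard {L Q : Set (N.Wire m)}
    (h : IsSeparation (N.WireAdj m) (N.inWires m) (N.outWires m) L Q) :
    ∃ C, N.IsCutSet C ∧ ∑ e ∈ C, m e ≤ (L ∩ Q).ncard := by
  let f : N.V ⊕ N.S ⊕ N.T → Bool :=
    Sum.elim (fun v => decide (∀ x : N.Wire m, N.Incident x.1 (.inl v) → x ∈ Q))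
      (Sum.elim (fun _ => false) fun _ => true)
  have mem_L : ∀ x : N.Wire m, x.1 ∈ touching f false → x ∈ L := by
    rintro x ⟨v | u | u, hx, hf⟩
    · simp only [f, Sum.elim_inl, decide_eq_false_iff_not, not_forall] at hf
      obtain ⟨y, hy, hyQ⟩ := hf
      exact h.mem_left_of_rel ⟨v, hy, hx⟩ hyQ
    · exact h.left_subset ⟨u, incident_inr_inl_iff.1 hx⟩
    · simp [f] at hf
  have mem_Q : ∀ x : N.Wire m, x.1 ∈ touching f true → x ∈ Q := by
    rintro x ⟨v | u | u, hx, hf⟩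
    · exact of_decide_eq_true hf x hx
    · simp [f] at hf
    · exact h.right_subset ⟨u, incident_inr_inr_iff.1 hx⟩
  refine ⟨_, isCutSet_filter (f := f) (fun _ => rfl) fun _ => rfl, ?_⟩
  calc _ = (Finset.sigma {e | f (N.ends e 0) ≠ f (N.ends e 1)} fun e =>
        (Finset.univ : Finset (Fin (m e)))).card := by simp [Finset.card_sigma]
    _ ≤ (L ∩ Q).ncard := by
        rw [← Set.ncard_coe_finset]
        refine Set.ncard_le_ncard fun x hx => ?_
        have hx' := mem_touching_inter_iff.2
          (Finset.mem_filter.1 (Finset.mem_sigma.1 (Finset.mem_coe.1 hx)).1).2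
        exact ⟨mem_L x hx'.1, mem_Q x hx'.2⟩

theorem exists_wire_linkage {k : ℕ} (hk : ∀ C, N.IsCutSet C → k ≤ ∑ e ∈ C, m e) :
    Nonempty (Linkage (N.WireAdj m) (N.inWires m) (N.outWires m) (Fin k)) :=
  exists_linkage fun _ _ hLQ =>
    let ⟨C, hC, hsum⟩ := exists_isCutSet_sum_le_ncard hLQ
    (hk C hC).trans hsum

end Wires

section LocalIndicator

variable {N} {Ω : Type*}

/-- The tensors that test, at each vertex separately, whether an edge labelling looks like a member
of the family `F`. -/
noncomputable def localIndicator (F : Ω → ∀ e, Fin (N.c e)) : N.Assignment :=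
  fun v g => if ∃ ω, ∀ p : N.Legs v, g p = F ω p.1.1 then 1 else 0

theorem β_localIndicator [Fintype Ω] {F : Ω → ∀ e, Fin (N.c e)} (hF : F.Injective)
    (hglue : ∀ W, (∀ v, ∃ ω, ∀ p : N.Legs v, W p.1.1 = F ω p.1.1) → W ∈ Set.range F) :
    N.β (localIndicator F) =
      countMatrix (m := N.OutIdx) (n := N.InIdx) (fun ω u => F ω (N.outEdge u))
        fun ω u => F ω (N.inEdge u) := by
  have prod_eq : ∀ W : ∀ e, Fin (N.c e), ∏ v, localIndicator F v (fun p => W p.1.1) =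
      if W ∈ Set.range F then 1 else 0 := fun W => by
    split_ifs with hW
    · obtain ⟨ω, rfl⟩ := hW
      exact Finset.prod_eq_one fun v _ => if_pos ⟨ω, fun _ => rfl⟩
    · obtain ⟨v, hv⟩ := not_forall.1 (mt (hglue W) hW)
      exact Finset.prod_eq_zero (Finset.mem_univ v) (if_neg hv)
  ext i j
  simp only [β, prod_eq, countMatrix, Matrix.of_apply, Finset.natCast_card_filter]
  symm
  refine Fintype.sum_of_injective F hF _ _ (fun W hW => by simp [hW]) fun ω => ?_
  rw [if_pos (Set.mem_range_self ω)]
  exact if_congr (and_comm.trans (and_congr funext_iff funext_iff)) rfl rfl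

end LocalIndicator

section Labelling

variable {N} {m : N.E → ℕ} {ι α : Type*} [Inhabited α]

/-- The wires that lie on no path of the linkage and are attached to no internal vertex. No tensor
sees such a wire, so its letter remains free. -/
def looseWires (ℓ : Linkage (N.WireAdj m) (N.inWires m) (N.outWires m) ι) : Set (N.Wire m) :=
  {x | (∀ j, x ∉ ℓ.path j) ∧ ∀ v, ¬ N.Incident x.1 (.inl v)}

variable (ℓ : Linkage (N.WireAdj m) (N.inWires m) (N.outWires m) ι)

/-- The labelling of the wires that carries the letter `t (.inl j)` all along path `j`, `t (.inr x)`
on the loose wire `x`, and the default letter elsewhere. -/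
noncomputable def label (t : ι ⊕ looseWires ℓ → α) (x : N.Wire m) : α :=
  if h : ∃ j, x ∈ ℓ.path j then t (.inl h.choose)
  else if h : x ∈ looseWires ℓ then t (.inr ⟨x, h⟩) else default

variable {ℓ} {t : ι ⊕ looseWires ℓ → α} {x : N.Wire m}

theorem label_of_mem_path {j : ι} (hx : x ∈ ℓ.path j) : label ℓ t x = t (.inl j) := by
  have h : ∃ j, x ∈ ℓ.path j := ⟨j, hx⟩
  rw [label, dif_pos h, ℓ.eq_of_mem h.choose_spec hx]

theorem label_of_mem_looseWires (hx : x ∈ looseWires ℓ) : label ℓ t x = t (.inr ⟨x, hx⟩) := by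
  rw [label, dif_neg (not_exists.2 hx.1), dif_pos hx]

theorem label_of_notMem (hpath : ∀ j, x ∉ ℓ.path j) (hloose : x ∉ looseWires ℓ) :
    label ℓ t x = default := by
  rw [label, dif_neg (not_exists.2 hpath), dif_neg hloose]

theorem label_source (t : ι ⊕ looseWires ℓ → α) (o : ι ⊕ looseWires ℓ) :
    label ℓ t (Sum.elim ℓ.source (↑) o) = t o := by
  rcases o with j | x
  · exact label_of_mem_path (ℓ.joins j).source_mem
  · exact label_of_mem_looseWires x.2

theorem label_target (t : ι ⊕ looseWires ℓ → α) (o : ι ⊕ looseWires ℓ) :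
    label ℓ t (Sum.elim ℓ.target (↑) o) = t o := by
  rcases o with j | x
  · exact label_of_mem_path (ℓ.joins j).target_mem
  · exact label_of_mem_looseWires x.2

theorem mem_inWires_or_mem_outWires (hx : x ∈ looseWires ℓ) :
    x ∈ N.inWires m ∨ x ∈ N.outWires m := by
  have hend : N.Incident x.1 (N.ends x.1 0) := ⟨0, rfl⟩
  rcases hn : N.ends x.1 0 with v | u | u
  · exact absurd (hn ▸ hend) (hx.2 v)
  · exact .inl ⟨u, incident_inr_inl_iff.1 (hn ▸ hend)⟩
  · exact .inr ⟨u, incident_inr_inr_iff.1 (hn ▸ hend)⟩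

theorem eq_label_of_forall_vertex {w : N.Wire m → α}
    (hw : ∀ v, ∃ t, ∀ x : N.Wire m, N.Incident x.1 (.inl v) → w x = label ℓ t x) :
    w = label ℓ fun o => w (Sum.elim ℓ.source (↑) o) := by
  ext1 x
  by_cases hpath : ∃ j, x ∈ ℓ.path j
  · obtain ⟨j, hj⟩ := hpath
    rw [label_of_mem_path hj]
    refine (ℓ.joins j).apply_eq_apply_source (fun y hy z hz ⟨v, hyv, hzv⟩ => ?_) hj
    obtain ⟨t, ht⟩ := hw v
    rw [ht y hyv, ht z hzv, label_of_mem_path hy, label_of_mem_path hz]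
  · rw [not_exists] at hpath
    by_cases hloose : x ∈ looseWires ℓ
    · rw [label_of_mem_looseWires hloose]
      rfl
    · obtain ⟨v, hv⟩ : ∃ v, N.Incident x.1 (.inl v) := by
        by_contra hno
        exact hloose ⟨hpath, not_exists.1 hno⟩
      obtain ⟨t, ht⟩ := hw v
      rw [ht x hv, label_of_notMem hpath hloose, label_of_notMem hpath hloose]

variable (D : ∀ e, Fin (N.c e) ≃ (Fin (m e) → α))

/-- The edge labelling that spells the wire labels given by `t`, where `D e` encodes strings of
`m e` letters as indices of the edge `e`. -/
noncomputable def edgeLabel (t : ι ⊕ looseWires ℓ → α) (e : N.E) : Fin (N.c e) :=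
  (D e).symm fun i => label ℓ t ⟨e, i⟩

theorem apply_edgeLabel (t : ι ⊕ looseWires ℓ → α) (x : N.Wire m) :
    D x.1 (edgeLabel D t x.1) x.2 = label ℓ t x := by
  rw [edgeLabel, Equiv.apply_symm_apply]

theorem label_eq_of_edgeLabel_eq {t t' : ι ⊕ looseWires ℓ → α}
    (h : edgeLabel D t x.1 = edgeLabel D t' x.1) : label ℓ t x = label ℓ t' x := by
  rw [← apply_edgeLabel D, h, apply_edgeLabel]

theorem edgeLabel_injective : (edgeLabel (ℓ := ℓ) D).Injective := fun t t' htt' => by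
  ext1 o
  rw [← label_source t, ← label_source t', label_eq_of_edgeLabel_eq D (congrFun htt' _)]

theorem mem_range_edgeLabel {W : ∀ e, Fin (N.c e)}
    (hW : ∀ v, ∃ t, ∀ p : N.Legs v, W p.1.1 = edgeLabel (ℓ := ℓ) D t p.1.1) :
    W ∈ Set.range (edgeLabel (ℓ := ℓ) D) := by
  let w (x : N.Wire m) : α := D x.1 (W x.1) x.2
  have hlabel : w = label ℓ fun o => w (Sum.elim ℓ.source (↑) o) :=
    eq_label_of_forall_vertex fun v => by
      obtain ⟨t, ht⟩ := hW v
      exact ⟨t, fun x ⟨i, hi⟩ => by rw [← apply_edgeLabel D, ← ht ⟨(x.1, i), hi⟩]⟩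
  refine ⟨fun o => w (Sum.elim ℓ.source (↑) o),
    funext fun e => (D e).injective (funext fun i => ?_)⟩
  exact (apply_edgeLabel D _ ⟨e, i⟩).trans (congrFun hlabel ⟨e, i⟩).symm

theorem exists_log_card_pow_le_EE [Fintype ι] [Fintype α] (D : ∀ e, Fin (N.c e) ≃ (Fin (m e) → α))
    (ℓ : Linkage (N.WireAdj m) (N.inWires m) (N.outWires m) ι) :
    ∃ 𝒯 : N.Assignment, N.β 𝒯 ≠ 0 ∧
      Real.log ((Fintype.card α ^ Fintype.card ι : ℕ) : ℝ) ≤ N.EE 𝒯 := by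
  have hβ := β_localIndicator (edgeLabel_injective (ℓ := ℓ) D) fun _ => mem_range_edgeLabel D
  refine ⟨localIndicator (edgeLabel (ℓ := ℓ) D), hβ ▸ countMatrix_ne_zero _ _, ?_⟩
  let fromIn : Finset (ι ⊕ looseWires ℓ) := {o | Sum.elim ℓ.source (↑) o ∈ N.inWires m}
  let fromOut : Finset (ι ⊕ looseWires ℓ) := {o | Sum.elim ℓ.target (↑) o ∈ N.outWires m}
  have hunion : fromIn ∪ fromOut = Finset.univ := by
    ext o
    rcases o with j | x
    · simp [fromIn, ℓ.source_mem j]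
    · simpa [fromIn, fromOut] using mem_inWires_or_mem_outWires x.2
  have hinter : Fintype.card ι ≤ (fromIn ∩ fromOut).card := by
    rw [← Finset.card_univ, ← Finset.card_map Function.Embedding.inl]
    refine Finset.card_le_card fun o ho => ?_
    obtain ⟨j, -, rfl⟩ := Finset.mem_map.1 ho
    simp [fromIn, fromOut, ℓ.source_mem j, ℓ.target_mem j]
  rw [EE_eq_sum_negMulLog, hβ]
  refine le_trans ?_ (log_card_pow_le_sum_negMulLog_countMatrix hunion
    (fun t t' htt' o ho => ?_) fun t t' htt' o ho => ?_)
  · have hα : 0 < Fintype.card α := Fintype.card_pos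
    gcongr
  · obtain ⟨u, hu⟩ := (Finset.mem_filter.1 ho).2
    rw [← label_source t, ← label_source t',
      label_eq_of_edgeLabel_eq D (hu.symm ▸ congrFun htt' u)]
  · obtain ⟨u, hu⟩ := (Finset.mem_filter.1 ho).2
    rw [← label_target t, ← label_target t',
      label_eq_of_edgeLabel_eq D (hu.symm ▸ congrFun htt' u)]

end Labelling

theorem exists_log_QMC_le_EE {d : ℕ} (hd : 0 < d) {m : N.E → ℕ} (hm : ∀ e, N.c e = d ^ m e) :
    ∃ 𝒯 : N.Assignment, N.β 𝒯 ≠ 0 ∧ Real.log N.QMC ≤ N.EE 𝒯 := by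
  obtain ⟨C, hC, hmin⟩ := Set.exists_min_image {C | N.IsCutSet C} (fun C => ∑ e ∈ C, m e)
    (Set.toFinite _) N.exists_isCutSet
  obtain ⟨ℓ⟩ := exists_wire_linkage hmin
  have : Inhabited (Fin d) := ⟨⟨0, hd⟩⟩
  obtain ⟨𝒯, h𝒯, hle⟩ := exists_log_card_pow_le_EE
    (fun e => (finCongr (hm e)).trans finFunctionFinEquiv.symm) ℓ
  refine ⟨𝒯, h𝒯, le_trans ?_ hle⟩
  have hQMC : N.QMC ≤ d ^ ∑ e ∈ C, m e := by
    simpa [hm, Finset.prod_pow_eq_pow_sum] using QMC_le_prod_of_isCutSet hC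
  have hQMC_pos : 0 < N.QMC := by
    obtain ⟨C', -, hC'⟩ := N.exists_isCutSet_prod_eq_QMC
    exact hC' ▸ Finset.prod_pos fun e _ => N.c_pos e
  rw [Fintype.card_fin, Fintype.card_fin]
  exact Real.log_le_log (by exact_mod_cast hQMC_pos) (by exact_mod_cast hQMC)

end TN

/-- If every edge capacity is a power of a fixed integer `d > 0`, the maximal entanglement
entropy between inputs and outputs equals the logarithm of the quantum min-cut. -/
theorem stmt_12 (N : TN) (d : ℕ) (hd : 0 < d)
    (h : ∀ e : N.E, ∃ m : ℕ, N.c e = d ^ m) :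
    N.MEE = Real.log N.QMC := by
  choose m hm using h
  obtain ⟨𝒯, h𝒯, hle⟩ := N.exists_log_QMC_le_EE hd hm
  refine IsGreatest.csSup_eq ⟨⟨𝒯, h𝒯, le_antisymm hle (TN.EE_le_log_QMC h𝒯)⟩, ?_⟩
  rintro _ ⟨𝒯', h𝒯', rfl⟩
  exact TN.EE_le_log_QMC h𝒯'
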